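/- If $\mathcal{F}$ and $\mathcal{G}$ are regular subsets of $[\mathbb{N}]^{<\omega}$ with Cantor–Bendixson indices $\alpha+1$ and $\beta+1$ respectively, then $\mathcal{F}[\mathcal{G}]$ is regular with Cantor–Bendixson index $\beta\alpha + 1$. -/

import Mathlib

/-- The indicator of a finite set of naturals, as a point of the Cantor space `ℕ → Bool`. -/
def finsetInd (E : Finset ℕ) : ℕ → Bool := fun n => decide (n ∈ E)

/-- A family of finite subsets of `ℕ`, viewed as a subset of the Cantor space. -/
def famTop (F : Set (Finset ℕ)) : Set (ℕ → Bool) := finsetInd '' F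

/-- A family is hereditary if it is closed under subsets. -/
def Hereditary (F : Set (Finset ℕ)) : Prop := ∀ E ∈ F, ∀ G ⊆ E, G ∈ F

/-- `G` is a spread of `E` if they have the same cardinality and the `i`-th element of `G`
(in increasing order) is at least the `i`-th element of `E`. -/
def IsSpreadOf (G E : Finset ℕ) : Prop :=
  ∃ h : G.card = E.card, ∀ i : Fin E.card,
    ((E.orderIsoOfFin rfl) i).1 ≤ ((G.orderIsoOfFin h) i).1

/-- A family is spreading if it contains all spreads of its members. -/
def Spreading (F : Set (Finset ℕ)) : Prop := ∀ E ∈ F, ∀ G, IsSpreadOf G E → G ∈ F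

/-- A family is regular if it is hereditary, spreading, and compact in the Cantor space. -/
def RegularFam (F : Set (Finset ℕ)) : Prop :=
  Hereditary F ∧ Spreading F ∧ IsCompact (famTop F)

/-- `E < F` for finite sets: every element of `E` is less than every element of `F`. -/
def FinsetLT (E F : Finset ℕ) : Prop := ∀ a ∈ E, ∀ b ∈ F, a < b

/-- The bracket operation
`F[G] = {∅} ∪ {E₁ ∪ ⋯ ∪ Eₙ : ∅ ≠ Eᵢ ∈ G, E₁ < ⋯ < Eₙ, (min Eᵢ)ᵢ ∈ F}`. -/
def bracketFam (F G : Set (Finset ℕ)) : Set (Finset ℕ) :=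
  {∅} ∪ { E | ∃ (n : ℕ) (_ : 0 < n) (Es : Fin n → Finset ℕ)
      (hne : ∀ i, (Es i).Nonempty),
      (∀ i, Es i ∈ G) ∧ (∀ i j : Fin n, i < j → FinsetLT (Es i) (Es j)) ∧
      (Finset.univ.image fun i => (Es i).min' (hne i)) ∈ F ∧
      E = Finset.univ.biUnion Es }

/-- The Cantor–Bendixson derived family: those `E` whose indicator is an accumulation point
of the family in the Cantor space. -/
def derivFam (F : Set (Finset ℕ)) : Set (Finset ℕ) :=
  { E | finsetInd E ∈ derivedSet (famTop F) }

/-- Transfinite iteration of the Cantor–Bendixson derived set. -/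
noncomputable def CBderiv (A : Set (ℕ → Bool)) (o : Ordinal) : Set (ℕ → Bool) :=
  Ordinal.limitRecOn o A (fun _ S => derivedSet S)
    (fun o _ ih => ⋂ b : { b : Ordinal // b < o }, ih b.1 b.2)

/-- The Cantor–Bendixson index: the least ordinal `η` with `A⁽ᵉᵗᵃ⁾ = ∅`. -/
noncomputable def CBindex (A : Set (ℕ → Bool)) : Ordinal :=
  sInf { o | CBderiv A o = ∅ }

/-- The Cantor–Bendixson index of a family of finite subsets of `ℕ`. -/
noncomputable def CBfam (F : Set (Finset ℕ)) : Ordinal := CBindex (famTop F)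

/-- The `o`-th Cantor–Bendixson derived family. -/
noncomputable def derivFamIter (F : Set (Finset ℕ)) (o : Ordinal) : Set (Finset ℕ) :=
  { E | finsetInd E ∈ CBderiv (famTop F) o }


namespace BF

open Finset

/-- number of elements of `A` below `k` -/
def cnt (A : Finset ℕ) (k : ℕ) : ℕ := (A.filter (· < k)).card

/-- domination: `A` is a spread of a subset of `B` -/
def Dom (A B : Finset ℕ) : Prop := ∀ k, cnt A k ≤ cnt B k

/-- closed under domination -/
def DomClosed (F : Set (Finset ℕ)) : Prop := ∀ B ∈ F, ∀ A, Dom A B → A ∈ F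

/-- `m` is above `E` -/
def Abv (E : Finset ℕ) (m : ℕ) : Prop := ∀ x ∈ E, x < m

lemma Abv.notMem {E : Finset ℕ} {m : ℕ} (h : Abv E m) : m ∉ E := fun hm => lt_irrefl _ (h m hm)

lemma cnt_insert {A : Finset ℕ} {a : ℕ} (h : a ∉ A) (k : ℕ) :
    cnt (insert a A) k = cnt A k + if a < k then 1 else 0 := by
  unfold cnt
  rw [Finset.filter_insert]
  split_ifs with hk
  · rw [Finset.card_insert_of_notMem (by simp [h])]
  · simp

lemma cnt_mono {A B : Finset ℕ} (h : A ⊆ B) (k : ℕ) : cnt A k ≤ cnt B k :=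
  Finset.card_le_card (Finset.filter_subset_filter _ h)

lemma cnt_le_card (A : Finset ℕ) (k : ℕ) : cnt A k ≤ A.card :=
  Finset.card_le_card (Finset.filter_subset _ _)

lemma cnt_eq_card {A : Finset ℕ} {k : ℕ} (h : Abv A k) : cnt A k = A.card := by
  unfold cnt
  rw [Finset.filter_true_of_mem h]

lemma cnt_empty (k : ℕ) : cnt ∅ k = 0 := by simp [cnt]

lemma cnt_singleton (a k : ℕ) : cnt {a} k = if a < k then 1 else 0 := by
  have := cnt_insert (A := ∅) (a := a) (by simp) k
  simpa [cnt_empty] using this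

lemma Dom.refl (A : Finset ℕ) : Dom A A := fun _ => le_rfl

lemma Dom.trans {A B C : Finset ℕ} (h : Dom A B) (h' : Dom B C) : Dom A C :=
  fun k => (h k).trans (h' k)

lemma Dom.of_subset {A B : Finset ℕ} (h : A ⊆ B) : Dom A B := cnt_mono h

lemma Dom.empty (B : Finset ℕ) : Dom ∅ B := Dom.of_subset (by simp)

lemma exists_Abv (A : Finset ℕ) : ∃ N, ∀ m, N ≤ m → Abv A m :=
  ⟨A.sup id + 1, fun m hm x hx => by
    have : id x ≤ A.sup id := Finset.le_sup hx
    simp only [id] at this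
    omega⟩

lemma Dom.card_le {A B : Finset ℕ} (h : Dom A B) : A.card ≤ B.card := by
  obtain ⟨N, hN⟩ := exists_Abv A
  rw [← cnt_eq_card (hN N le_rfl)]
  exact (h N).trans (cnt_le_card _ _)

lemma Dom.ins {A B : Finset ℕ} {a b : ℕ} (h : Dom A B) (hA : a ∉ A) (hB : b ∉ B) (hab : b ≤ a) :
    Dom (insert a A) (insert b B) := by
  intro k
  rw [cnt_insert hA, cnt_insert hB]
  have := h k
  split_ifs <;> omega

lemma Dom.singleton {a b : ℕ} (hab : b ≤ a) : Dom {a} {b} := by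
  intro k
  rw [cnt_singleton, cnt_singleton]
  split_ifs <;> omega

/-- hereditary and spreading families are closed under domination -/
lemma orderEmb_cnt (A : Finset ℕ) {c : ℕ} (h : A.card = c) (i : Fin c) (k : ℕ) :
    A.orderEmbOfFin h i < k ↔ i.1 < cnt A k := by
  subst h
  have key : cnt A k = ((Finset.univ : Finset (Fin A.card)).filter
      (fun j => A.orderEmbOfFin rfl j < k)).card := by
    unfold cnt
    rw [← Finset.card_map (A.orderEmbOfFin rfl).toEmbedding]
    congr 1
    ext x
    simp only [Finset.mem_filter, Finset.mem_map, Finset.mem_univ, true_and]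
    constructor
    · rintro ⟨hx, hk⟩
      have : x ∈ Set.range (A.orderEmbOfFin rfl) := by
        rw [Finset.range_orderEmbOfFin]; exact hx
      obtain ⟨j, rfl⟩ := this
      exact ⟨j, hk, rfl⟩
    · rintro ⟨j, hj, rfl⟩
      exact ⟨Finset.orderEmbOfFin_mem _ _ _, hj⟩
  constructor
  · intro hi
    rw [key]
    have : (Finset.Iic i).card ≤ ((Finset.univ : Finset (Fin A.card)).filter
      (fun j => A.orderEmbOfFin rfl j < k)).card := by
      apply Finset.card_le_card
      intro j hj
      simp only [Finset.mem_Iic] at hj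
      simp only [Finset.mem_filter, Finset.mem_univ, true_and]
      exact lt_of_le_of_lt ((A.orderEmbOfFin rfl).monotone hj) hi
    rw [Fin.card_Iic] at this
    omega
  · intro hi
    by_contra hk
    have : ((Finset.univ : Finset (Fin A.card)).filter
      (fun j => A.orderEmbOfFin rfl j < k)).card ≤ (Finset.Iio i).card := by
      apply Finset.card_le_card
      intro j hj
      simp only [Finset.mem_filter, Finset.mem_univ, true_and] at hj
      simp only [Finset.mem_Iio]
      by_contra hij
      exact hk (lt_of_le_of_lt ((A.orderEmbOfFin rfl).monotone (not_lt.1 hij)) hj)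
    rw [Fin.card_Iio] at this
    omega

lemma isSpread_iff {A B : Finset ℕ} : IsSpreadOf A B ↔ A.card = B.card ∧ Dom A B := by
  constructor
  · rintro ⟨h, hs⟩
    refine ⟨h, fun k => ?_⟩
    by_contra hk
    push Not at hk
    have h1 : cnt B k < B.card := by
      have := cnt_le_card A k
      omega
    have := hs ⟨cnt B k, h1⟩
    simp only [Finset.coe_orderIsoOfFin_apply] at this
    have h2 := (orderEmb_cnt A h ⟨cnt B k, h1⟩ k).2 hk
    have h3 := (orderEmb_cnt B rfl ⟨cnt B k, h1⟩ k).1 (lt_of_le_of_lt this h2)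
    exact lt_irrefl _ h3
  · rintro ⟨h, hd⟩
    refine ⟨h, fun i => ?_⟩
    simp only [Finset.coe_orderIsoOfFin_apply]
    have h1 := (orderEmb_cnt A h i (A.orderEmbOfFin h i + 1)).1 (Nat.lt_succ_self _)
    have h2 := (orderEmb_cnt B rfl i (A.orderEmbOfFin h i + 1)).2 (lt_of_lt_of_le h1 (hd _))
    omega

/-- a dominated set is dominated by a subset of the same cardinality -/
lemma Dom.initial {A B : Finset ℕ} (hd : Dom A B) :
    ∃ C, C ⊆ B ∧ A.card = C.card ∧ Dom A C := by
  induction B using Finset.induction_on_max with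
  | empty =>
    have := hd.card_le
    simp only [Finset.card_empty, Nat.le_zero] at this
    exact ⟨∅, by simp, by simpa using this, hd⟩
  | insert e B he ih =>
    have hn : e ∉ B := Abv.notMem he
    by_cases hc : A.card = (insert e B).card
    · exact ⟨_, subset_rfl, hc, hd⟩
    · have h1 := hd.card_le
      rw [Finset.card_insert_of_notMem hn] at h1 hc
      obtain ⟨C, hC, h2, h3⟩ := ih (fun k => by
        have h2 := hd k
        rw [cnt_insert hn] at h2
        split_ifs at h2 with hk
        · have : cnt B k = B.card := cnt_eq_card (fun x hx => (he x hx).trans hk)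
          have := cnt_le_card A k
          omega
        · exact h2)
      exact ⟨C, hC.trans (Finset.subset_insert _ _), h2, h3⟩

lemma domClosed_iff {F : Set (Finset ℕ)} : DomClosed F ↔ Hereditary F ∧ Spreading F := by
  constructor
  · intro h
    exact ⟨fun E hE G hG => h E hE G (Dom.of_subset hG),
      fun E hE G hG => h E hE G (isSpread_iff.1 hG).2⟩
  · rintro ⟨h1, h2⟩ B hB A hA
    obtain ⟨C, hC, hc, hd⟩ := hA.initial
    exact h2 C (h1 B hB C hC) A (isSpread_iff.2 ⟨hc, hd⟩)

/-- no infinite branch -/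
def NoBranch (F : Set (Finset ℕ)) : Prop :=
  ∀ A : Set ℕ, A.Infinite → ∃ E : Finset ℕ, (E : Set ℕ) ⊆ A ∧ E ∉ F

lemma finsetInd_inj : Function.Injective finsetInd := by
  intro A B h
  ext x
  have := congrFun h x
  simpa [finsetInd] using this

lemma mem_famTop {F : Set (Finset ℕ)} {E : Finset ℕ} : finsetInd E ∈ famTop F ↔ E ∈ F :=
  finsetInd_inj.mem_set_image

/-- basic neighbourhoods in Cantor space -/
def cyl (x : ℕ → Bool) (N : ℕ) : Set (ℕ → Bool) := {y | ∀ i < N, y i = x i}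

lemma cyl_open (x : ℕ → Bool) (N : ℕ) : IsOpen (cyl x N) := by
  have : cyl x N = ⋂ i ∈ Finset.range N, (fun y : ℕ → Bool => y i) ⁻¹' {x i} := by
    ext y; simp [cyl]
  rw [this]
  exact isOpen_biInter_finset fun i _ => (isOpen_discrete _).preimage (continuous_apply i)

lemma cyl_basis {x : ℕ → Bool} {U : Set (ℕ → Bool)} (hU : IsOpen U) (hx : x ∈ U) :
    ∃ N, cyl x N ⊆ U := by
  obtain ⟨I, u, h1, h2⟩ := isOpen_pi_iff.1 hU x hx
  obtain ⟨N, hN⟩ := exists_Abv I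
  refine ⟨N, fun y hy => h2 fun i hi => ?_⟩
  rw [hy i (hN N le_rfl i hi)]
  exact (h1 i hi).2

lemma isCompact_iff {F : Set (Finset ℕ)} (hF : Hereditary F) :
    IsCompact (famTop F) ↔ NoBranch F := by
  constructor
  · intro hc A hA
    by_contra hcon
    push Not at hcon
    have hcl : IsClosed (famTop F) := hc.isClosed
    classical
    let x : ℕ → Bool := fun n => decide (n ∈ A)
    have hx : x ∈ closure (famTop F) := by
      rw [mem_closure_iff]
      intro U hU hxU
      obtain ⟨N, hN⟩ := cyl_basis hU hxU
      refine ⟨finsetInd ((Finset.range N).filter (· ∈ A)), hN ?_, mem_famTop.2 (hcon _ ?_)⟩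
      · intro i hi
        simp [finsetInd, x, hi]
      · intro i hi
        simp at hi
        exact hi.2
    rw [hcl.closure_eq] at hx
    obtain ⟨E, hE, hEx⟩ := hx
    apply hA
    apply E.finite_toSet.subset
    intro n hn
    have := congrFun hEx n
    simpa [finsetInd, x, hn] using this
  · intro hN
    apply IsClosed.isCompact
    apply isClosed_of_closure_subset
    intro x hx
    have hsub : ∀ E : Finset ℕ, (E : Set ℕ) ⊆ {n | x n = true} → E ∈ F := by
      intro E hE
      obtain ⟨N, hN⟩ := exists_Abv E
      obtain ⟨y, hy1, ⟨B, hB, rfl⟩⟩ := mem_closure_iff.1 hx (cyl x N) (cyl_open x N) (fun i _ => rfl)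
      apply hF B hB
      intro i hi
      have h1 := hy1 i (hN N le_rfl i hi)
      have h2 : x i = true := hE hi
      rw [h2] at h1
      simpa [finsetInd] using h1
    by_cases hinf : {n | x n = true}.Infinite
    · obtain ⟨E, h1, h2⟩ := hN _ hinf
      exact absurd (hsub E h1) h2
    · rw [Set.not_infinite] at hinf
      refine ⟨hinf.toFinset, hsub _ (by simp), ?_⟩
      ext n
      simp [finsetInd]

lemma derivedSet_fam {F : Set (Finset ℕ)} (hF : DomClosed F) (hN : NoBranch F) :
    derivedSet (famTop F) = famTop {E | ∃ m, Abv E m ∧ insert m E ∈ F} := by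
  have hH := (domClosed_iff.1 hF).1
  have hcl : IsClosed (famTop F) := ((isCompact_iff hH).2 hN).isClosed
  ext x
  rw [mem_derivedSet, accPt_iff_nhds]
  constructor
  · intro h
    have hx : x ∈ famTop F := by
      rw [← hcl.closure_eq, mem_closure_iff_nhds]
      intro U hU
      obtain ⟨y, hy, _⟩ := h U hU
      exact ⟨y, hy⟩
    obtain ⟨E, hE, rfl⟩ := hx
    rw [mem_famTop]
    obtain ⟨N, hN⟩ := exists_Abv E
    obtain ⟨y, ⟨hy, ⟨B, hB, rfl⟩⟩, hne⟩ := h _ ((cyl_open (finsetInd E) N).mem_nhds (fun i _ => rfl))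
    have hEB : ∀ i < N, (i ∈ B ↔ i ∈ E) := by
      intro i hi
      have := hy i hi
      simpa [finsetInd] using this
    have hsub : E ⊆ B := fun i hi => (hEB i (hN N le_rfl i hi)).2 hi
    have hne' : E ≠ B := fun h => hne (by rw [h])
    obtain ⟨m, hm, hm'⟩ := Finset.exists_of_ssubset (hsub.ssubset_of_ne hne')
    have hNm : N ≤ m := by
      by_contra hlt
      exact hm' ((hEB m (not_le.1 hlt)).1 hm)
    exact ⟨m, hN m hNm, hH B hB _ (Finset.insert_subset hm hsub)⟩
  · rintro ⟨E, ⟨m, hm, hE⟩, rfl⟩ U hU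
    obtain ⟨V, hVU, hV, hEV⟩ := mem_nhds_iff.1 hU
    obtain ⟨N, hN⟩ := cyl_basis hV hEV
    have hm' : Abv E (max m N) := fun x hx => lt_of_lt_of_le (hm x hx) (le_max_left _ _)
    refine ⟨finsetInd (insert (max m N) E), ⟨hVU (hN ?_), mem_famTop.2 ?_⟩, ?_⟩
    · intro i hi
      have : i ≠ max m N := (lt_of_lt_of_le hi (le_max_right _ _)).ne
      simp only [finsetInd, Finset.mem_insert, this, false_or]
    · exact hF _ hE _ ((Dom.refl E).ins hm'.notMem hm.notMem (le_max_left _ _))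
    · intro h
      exact hm'.notMem (by rw [← finsetInd_inj h]; simp)

/-- iterated derivative, combinatorially -/
def D (F : Set (Finset ℕ)) (ξ : Ordinal) : Set (Finset ℕ) :=
  {E | E ∈ F ∧ ∀ η, η < ξ → ∃ m, Abv E m ∧ insert m E ∈ D F η}
termination_by ξ

lemma mem_D {F : Set (Finset ℕ)} {ξ : Ordinal} {E : Finset ℕ} :
    E ∈ D F ξ ↔ E ∈ F ∧ ∀ η, η < ξ → ∃ m, Abv E m ∧ insert m E ∈ D F η := by
  rw [D]; rfl

lemma D_anti {F : Set (Finset ℕ)} {ξ ζ : Ordinal} (h : ξ ≤ ζ) : D F ζ ⊆ D F ξ := by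
  intro E hE
  rw [mem_D] at hE ⊢
  exact ⟨hE.1, fun η hη => hE.2 η (hη.trans_le h)⟩

lemma D_sub {F : Set (Finset ℕ)} {ξ : Ordinal} : D F ξ ⊆ F := fun _ hE => (mem_D.1 hE).1

lemma D_domClosed {F : Set (Finset ℕ)} (hF : DomClosed F) (ξ : Ordinal) : DomClosed (D F ξ) := by
  induction ξ using WellFoundedLT.induction with
  | ind ξ ih =>
    intro B hB A hA
    rw [mem_D] at hB ⊢
    refine ⟨hF B hB.1 A hA, fun η hη => ?_⟩
    obtain ⟨m, hm, hi⟩ := hB.2 η hη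
    obtain ⟨N, hN⟩ := exists_Abv A
    have h1 : Abv A (max m N) := hN _ (le_max_right _ _)
    exact ⟨max m N, h1, ih η hη _ hi _ (hA.ins h1.notMem hm.notMem (le_max_left _ _))⟩

lemma D_large {F : Set (Finset ℕ)} (hF : DomClosed F) {ξ η : Ordinal} {E : Finset ℕ}
    (hE : E ∈ D F ξ) (h : η < ξ) : ∃ N, ∀ m, N ≤ m → Abv E m ∧ insert m E ∈ D F η := by
  obtain ⟨m, hm, hi⟩ := (mem_D.1 hE).2 η h
  refine ⟨m, fun k hk => ?_⟩
  have h1 : Abv E k := fun x hx => (hm x hx).trans_le hk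
  exact ⟨h1, D_domClosed hF η _ hi _ ((Dom.refl E).ins h1.notMem hm.notMem hk)⟩

lemma D_succ {F : Set (Finset ℕ)} (hF : DomClosed F) (ξ : Ordinal) :
    D F (ξ + 1) = {E | ∃ m, Abv E m ∧ insert m E ∈ D F ξ} := by
  ext E
  rw [mem_D]
  constructor
  · intro h
    exact h.2 ξ (Order.lt_succ ξ)
  · rintro ⟨m, hm, hi⟩
    refine ⟨hF _ (D_sub hi) _ (Dom.of_subset (Finset.subset_insert _ _)), fun η hη => ?_⟩
    exact ⟨m, hm, D_anti (Order.lt_succ_iff.1 hη) hi⟩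

lemma CBderiv_eq {F : Set (Finset ℕ)} (hF : DomClosed F) (hN : NoBranch F) (ξ : Ordinal) :
    CBderiv (famTop F) ξ = famTop (D F ξ) := by
  induction ξ using Ordinal.limitRecOn with
  | zero =>
    unfold CBderiv
    rw [Ordinal.limitRecOn_zero]
    congr 1
    ext E
    rw [mem_D]
    exact ⟨fun h => ⟨h, fun η hη => absurd hη (not_lt_bot)⟩, fun h => h.1⟩
  | add_one ξ ih =>
    have : CBderiv (famTop F) (ξ + 1) = derivedSet (CBderiv (famTop F) ξ) := by
      unfold CBderiv
      rw [Ordinal.limitRecOn_add_one]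
    rw [this, ih, D_succ hF, derivedSet_fam (D_domClosed hF ξ)]
    intro A hA
    obtain ⟨E, h1, h2⟩ := hN A hA
    exact ⟨E, h1, fun h => h2 (D_sub h)⟩
  | limit ξ hξ ih =>
    have : CBderiv (famTop F) ξ = ⋂ b : { b : Ordinal // b < ξ }, CBderiv (famTop F) b.1 := by
      unfold CBderiv
      rw [Ordinal.limitRecOn_limit (h := hξ)]
    rw [this]
    ext x
    simp only [Set.mem_iInter]
    constructor
    · intro h
      have h0 : (0 : Ordinal) < ξ := hξ.bot_lt
      have h1 := h ⟨0, h0⟩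
      simp only at h1
      rw [ih 0 h0] at h1
      obtain ⟨E, hE, rfl⟩ := h1
      rw [mem_famTop, mem_D]
      refine ⟨D_sub hE, fun η hη => ?_⟩
      have h2 := hξ.succ_lt hη
      have h3 := h ⟨_, h2⟩
      simp only at h3
      rw [ih _ h2, mem_famTop, mem_D] at h3
      exact h3.2 η (Order.lt_succ η)
    · rintro ⟨E, hE, rfl⟩ ⟨b, hb⟩
      simp only
      rw [ih b hb, mem_famTop]
      exact D_anti hb.le hE

lemma CBfam_iff {F : Set (Finset ℕ)} (hF : DomClosed F) (hN : NoBranch F) (α : Ordinal) :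
    CBfam F = α + 1 ↔ ∅ ∈ D F α ∧ ∀ E, E ∉ D F (α + 1) := by
  have hempty : ∀ o, CBderiv (famTop F) o = ∅ ↔ D F o = ∅ := by
    intro o
    rw [CBderiv_eq hF hN]
    unfold famTop
    exact Set.image_eq_empty
  have hset : {o | CBderiv (famTop F) o = ∅} = {o | D F o = ∅} := by
    ext o; exact hempty o
  unfold CBfam CBindex
  rw [hset]
  constructor
  · intro h
    have hne : {o | D F o = ∅}.Nonempty := by
      by_contra hcon
      rw [Set.not_nonempty_iff_eq_empty] at hcon
      rw [hcon, Ordinal.sInf_empty] at h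
      exact (Order.succ_ne_bot α) (by simpa using h.symm)
    have h1 := csInf_mem hne
    rw [h] at h1
    have h2 : α ∉ {o | D F o = ∅} := by
      apply notMem_of_lt_csInf'
      rw [h]
      exact Order.lt_succ α
    obtain ⟨E, hE⟩ := Set.nonempty_iff_ne_empty.2 h2
    refine ⟨D_domClosed hF α E hE ∅ (Dom.empty E), fun E hE => ?_⟩
    simp only [Set.mem_ofPred_eq] at h1
    rw [h1] at hE
    exact hE
  · rintro ⟨h1, h2⟩
    apply IsLeast.csInf_eq
    refine ⟨Set.eq_empty_of_forall_notMem h2, fun o ho => ?_⟩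
    by_contra hlt
    rw [not_le] at hlt
    have h3 : o ≤ α := Order.lt_succ_iff.1 hlt
    have h4 := D_anti h3 h1
    simp only [Set.mem_ofPred_eq] at ho
    rw [ho] at h4
    exact h4

/-- decompositions of `E` into consecutive pieces of `G`, with set of minima `M`, last piece `L` -/
inductive Dec (G : Set (Finset ℕ)) : Finset ℕ → Finset ℕ → Finset ℕ → Prop
  | nil : Dec G ∅ ∅ ∅
  | ext {E M L : Finset ℕ} {m : ℕ} : Dec G E M L → Abv E m → L.Nonempty → insert m L ∈ G →
      Dec G (insert m E) M (insert m L)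
  | new {E M L : Finset ℕ} {m : ℕ} : Dec G E M L → Abv E m → {m} ∈ G →
      Dec G (insert m E) (insert m M) {m}

/-- the greedy decomposition -/
inductive Greedy (G : Set (Finset ℕ)) : Finset ℕ → Finset ℕ → Finset ℕ → Prop
  | nil : Greedy G ∅ ∅ ∅
  | ext {E M L : Finset ℕ} {m : ℕ} : Greedy G E M L → Abv E m → L.Nonempty → insert m L ∈ G →
      Greedy G (insert m E) M (insert m L)
  | new {E M L : Finset ℕ} {m : ℕ} : Greedy G E M L → Abv E m → (L.Nonempty → insert m L ∉ G) →
      Greedy G (insert m E) (insert m M) {m}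

lemma Greedy.total (G : Set (Finset ℕ)) (E : Finset ℕ) : ∃ M L, Greedy G E M L := by
  induction E using Finset.induction_on_max with
  | empty => exact ⟨_, _, .nil⟩
  | insert e E he ih =>
    obtain ⟨M, L, h⟩ := ih
    by_cases hc : L.Nonempty ∧ insert e L ∈ G
    · exact ⟨_, _, .ext h he hc.1 hc.2⟩
    · exact ⟨_, _, .new h he (fun h1 h2 => hc ⟨h1, h2⟩)⟩

lemma Dec.sub {G : Set (Finset ℕ)} {E M L : Finset ℕ} (h : Dec G E M L) : M ⊆ E ∧ L ⊆ E := by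
  induction h with
  | nil => simp
  | ext h _ _ _ ih =>
    exact ⟨ih.1.trans (Finset.subset_insert _ _), Finset.insert_subset_insert _ ih.2⟩
  | new h _ _ ih =>
    exact ⟨Finset.insert_subset_insert _ ih.1, by simp⟩

lemma Greedy.sub {G : Set (Finset ℕ)} {E M L : Finset ℕ} (h : Greedy G E M L) :
    M ⊆ E ∧ L ⊆ E := by
  induction h with
  | nil => simp
  | ext h _ _ _ ih =>
    exact ⟨ih.1.trans (Finset.subset_insert _ _), Finset.insert_subset_insert _ ih.2⟩
  | new h _ _ ih =>
    exact ⟨Finset.insert_subset_insert _ ih.1, by simp⟩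

lemma Greedy.ne {G : Set (Finset ℕ)} {E M L : Finset ℕ} (h : Greedy G E M L) :
    (E.Nonempty → L.Nonempty) ∧ (M.Nonempty → L.Nonempty) := by
  cases h <;> simp

lemma Dec.ne {G : Set (Finset ℕ)} {E M L : Finset ℕ} (h : Dec G E M L) :
    (E.Nonempty → L.Nonempty) ∧ (L.Nonempty → M.Nonempty) := by
  induction h with
  | nil => simp
  | ext h _ h1 _ ih => simp [ih.2 h1]
  | new h _ _ ih => simp

lemma Abv.mono {A B : Finset ℕ} {m : ℕ} (h : Abv B m) (hs : A ⊆ B) : Abv A m :=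
  fun x hx => h x (hs hx)

lemma Dec.single {G : Set (Finset ℕ)} (hG : DomClosed G) {E M L : Finset ℕ} (h : Dec G E M L) :
    ∀ x ∈ E, {x} ∈ G := by
  induction h with
  | nil => simp
  | ext h _ _ h1 ih =>
    intro x hx
    rcases Finset.mem_insert.1 hx with rfl | hx
    · exact hG _ h1 _ (Dom.of_subset (by simp))
    · exact ih x hx
  | new h _ h1 ih =>
    intro x hx
    rcases Finset.mem_insert.1 hx with rfl | hx
    · exact h1
    · exact ih x hx

lemma Dom.single_mem {G : Set (Finset ℕ)} (hG : DomClosed G) {A B : Finset ℕ} (hd : Dom A B)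
    (hB : ∀ x ∈ B, {x} ∈ G) : ∀ x ∈ A, {x} ∈ G := by
  intro x hx
  have h1 := hd (x + 1)
  have h2 : 0 < cnt A (x + 1) := Finset.card_pos.2 ⟨x, by simp [hx]⟩
  obtain ⟨y, hy⟩ := Finset.card_pos.1 (h2.trans_le h1)
  rw [Finset.mem_filter] at hy
  exact hG _ (hB y hy.1) _ (Dom.singleton (by omega))

lemma Greedy.toDec {G : Set (Finset ℕ)} {E M L : Finset ℕ} (h : Greedy G E M L)
    (hs : ∀ x ∈ E, {x} ∈ G) : Dec G E M L := by
  induction h with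
  | nil => exact .nil
  | ext h h1 h2 h3 ih =>
    exact .ext (ih fun x hx => hs x (Finset.mem_insert_of_mem hx)) h1 h2 h3
  | new h h1 h2 ih =>
    exact .new (ih fun x hx => hs x (Finset.mem_insert_of_mem hx)) h1 (hs _ (by simp))

/-- the comparison invariant -/
def Inv (M' L' M L : Finset ℕ) : Prop :=
  Dom M' M ∧ (M'.card < M.card ∨ (M'.card = M.card ∧ Dom L' L))

lemma Inv.extR {M' L' M L : Finset ℕ} {e : ℕ} (h : Inv M' L' M L) : Inv M' L' M (insert e L) :=
  ⟨h.1, h.2.imp id fun h => ⟨h.1, h.2.trans (Dom.of_subset (Finset.subset_insert _ _))⟩⟩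

lemma Inv.newR {M' L' M L : Finset ℕ} {e : ℕ} (he : e ∉ M) (h : Inv M' L' M L) :
    Inv M' L' (insert e M) {e} := by
  refine ⟨h.1.trans (Dom.of_subset (Finset.subset_insert _ _)), .inl ?_⟩
  rw [Finset.card_insert_of_notMem he]
  have := h.1.card_le
  omega

lemma Dom.split {E' E : Finset ℕ} {e : ℕ} (he : Abv E e) (hd : Dom E' (insert e E)) :
    Dom E' E ∨ ∃ e' A', Abv A' e' ∧ E' = insert e' A' ∧ Dom A' E ∧ e ≤ e' := by
  have hn := he.notMem
  by_cases hc : E'.card ≤ E.card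
  · left
    intro k
    have h2 := hd k
    rw [cnt_insert hn] at h2
    split_ifs at h2 with hk
    · have : cnt E k = E.card := cnt_eq_card (fun x hx => (he x hx).trans hk)
      have := cnt_le_card E' k
      omega
    · exact h2
  · right
    have hc2 := hd.card_le
    rw [Finset.card_insert_of_notMem hn] at hc2
    induction E' using Finset.induction_on_max with
    | empty => simp at hc
    | insert e' A' he' _ =>
      have hn' : e' ∉ A' := Abv.notMem he'
      rw [Finset.card_insert_of_notMem hn'] at hc hc2
      refine ⟨e', A', he', rfl, fun k => ?_, ?_⟩
      · have h2 := hd k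
        rw [cnt_insert hn, cnt_insert hn'] at h2
        by_cases hk : e < k
        · have : cnt E k = E.card := cnt_eq_card (fun x hx => (he x hx).trans hk)
          have := cnt_le_card A' k
          omega
        · simp only [hk, if_false] at h2
          omega
      · have h2 := hd (e' + 1)
        rw [cnt_insert hn, cnt_insert hn'] at h2
        by_contra hlt
        have h3 : ¬ e < e' + 1 := by omega
        simp only [h3, if_false] at h2
        have h4 : cnt A' (e' + 1) = A'.card :=
          cnt_eq_card (fun x hx => (he' x hx).trans (Nat.lt_succ_self _))
        have h5 := cnt_le_card E (e' + 1)
        simp at h2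
        omega

lemma Greedy.inv_step {G : Set (Finset ℕ)} {A' e' : _} {E M' L' : Finset ℕ}
    (he' : Abv A' e') (hE : E = insert e' A') (h : Greedy G E M' L') :
    ∃ M0 L0, Greedy G A' M0 L0 ∧
      ((L0.Nonempty ∧ insert e' L0 ∈ G ∧ M' = M0 ∧ L' = insert e' L0) ∨
       ((L0.Nonempty → insert e' L0 ∉ G) ∧ M' = insert e' M0 ∧ L' = {e'})) := by
  have aux : ∀ {m : ℕ} {B : Finset ℕ}, Abv B m → insert m B = insert e' A' → m = e' ∧ B = A' := by
    intro m B hm heq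
    have h1 : m ∈ insert e' A' := by rw [← heq]; simp
    have h2 : e' ∈ insert m B := by rw [heq]; simp
    have h3 : m = e' := by
      rcases Finset.mem_insert.1 h1 with h | h
      · exact h
      rcases Finset.mem_insert.1 h2 with h' | h'
      · exact h'.symm
      have := he' _ h
      have := hm _ h'
      omega
    subst h3
    refine ⟨rfl, ?_⟩
    rw [← Finset.erase_insert hm.notMem, heq, Finset.erase_insert he'.notMem]
  cases h with
  | nil => exact absurd hE.symm (Finset.insert_ne_empty _ _)
  | ext h h1 h2 h3 =>
    obtain ⟨rfl, rfl⟩ := aux h1 hE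
    exact ⟨_, _, h, .inl ⟨h2, h3, rfl, rfl⟩⟩
  | new h h1 h2 =>
    obtain ⟨rfl, rfl⟩ := aux h1 hE
    exact ⟨_, _, h, .inr ⟨h2, rfl, rfl⟩⟩

lemma compare {G : Set (Finset ℕ)} (hG : DomClosed G) {E M L : Finset ℕ} (h : Dec G E M L) :
    ∀ {E' M' L' : Finset ℕ}, Dom E' E → Greedy G E' M' L' → Inv M' L' M L := by
  induction h with
  | nil =>
    intro E' M' L' hd hg
    have h0 := hd.card_le
    simp only [Finset.card_empty, Nat.le_zero, Finset.card_eq_zero] at h0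
    subst h0
    have h1 := hg.sub
    simp only [Finset.subset_empty] at h1
    rw [h1.1, h1.2]
    exact ⟨Dom.refl _, .inr ⟨rfl, Dom.refl _⟩⟩
  | @ext E M L e h he hL hLG ih =>
    intro E' M' L' hd hg
    rcases hd.split he with hd' | ⟨e', A', he', hE', hd', hle⟩
    · exact (ih hd' hg).extR
    have heL : e ∉ L := (he.mono h.sub.2).notMem
    obtain ⟨M0, L0, hg0, ⟨h1, h2, rfl, rfl⟩ | ⟨h1, rfl, rfl⟩⟩ := hg.inv_step he' hE'
    · have hi := ih hd' hg0
      refine ⟨hi.1, hi.2.imp id fun hh => ⟨hh.1, hh.2.ins ?_ heL hle⟩⟩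
      exact (he'.mono hg0.sub.2).notMem
    · have hi := ih hd' hg0
      have hM0 : e' ∉ M0 := (he'.mono hg0.sub.1).notMem
      rcases hi.2 with hlt | ⟨heq, hdL⟩
      · refine ⟨fun k => ?_, ?_⟩
        · rw [cnt_insert hM0]
          have h3 := hi.1 k
          split_ifs with hk
          · have h4 : cnt M k = M.card :=
              cnt_eq_card (fun x hx => (he x (h.sub.1 hx)).trans (by omega))
            have h5 := cnt_le_card M0 k
            omega
          · exact h3
        · rw [Finset.card_insert_of_notMem hM0]
          rcases Nat.lt_or_ge (M0.card + 1) M.card with h6 | h6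
          · exact .inl h6
          · refine .inr ⟨by omega, (Dom.singleton hle).trans (Dom.of_subset (by simp))⟩
      · exfalso
        have hMne : M.Nonempty := h.ne.2 hL
        have hM0ne : M0.Nonempty := by
          rw [← Finset.card_pos] at hMne ⊢
          omega
        apply h1 (hg0.ne.2 hM0ne)
        exact hG _ hLG _ (hdL.ins (he'.mono hg0.sub.2).notMem heL hle)
  | @new E M L e h he hLG ih =>
    intro E' M' L' hd hg
    have heM : e ∉ M := (he.mono h.sub.1).notMem
    rcases hd.split he with hd' | ⟨e', A', he', hE', hd', hle⟩
    · exact (ih hd' hg).newR heM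
    obtain ⟨M0, L0, hg0, ⟨h1, h2, rfl, rfl⟩ | ⟨h1, rfl, rfl⟩⟩ := hg.inv_step he' hE'
    · have hi := ih hd' hg0
      have := hi.1.card_le
      refine ⟨hi.1.trans (Dom.of_subset (Finset.subset_insert _ _)), .inl ?_⟩
      rw [Finset.card_insert_of_notMem heM]
      omega
    · have hi := ih hd' hg0
      have hM0 : e' ∉ M0 := (he'.mono hg0.sub.1).notMem
      refine ⟨hi.1.ins hM0 heM hle, ?_⟩
      rw [Finset.card_insert_of_notMem heM, Finset.card_insert_of_notMem hM0]
      rcases hi.2 with hlt | ⟨heq, hdL⟩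
      · left; omega
      · exact .inr ⟨by omega, Dom.singleton hle⟩

/-- the bracket via decompositions -/
def Br (F G : Set (Finset ℕ)) : Set (Finset ℕ) := {E | ∃ M L, Dec G E M L ∧ M ∈ F}

lemma Br_domClosed {F G : Set (Finset ℕ)} (hF : DomClosed F) (hG : DomClosed G) :
    DomClosed (Br F G) := by
  rintro E ⟨M, L, h, hM⟩ E' hd
  obtain ⟨M', L', hg⟩ := Greedy.total G E'
  exact ⟨M', L', hg.toDec (hd.single_mem hG (h.single hG)), hF _ hM _ (compare hG h hd hg).1⟩

lemma Br_greedy {F G : Set (Finset ℕ)} (hF : DomClosed F) (hG : DomClosed G) {E M L : Finset ℕ}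
    (hE : E ∈ Br F G) (hg : Greedy G E M L) : M ∈ F := by
  obtain ⟨M', L', h, hM⟩ := hE
  exact hF _ hM _ (compare hG h (Dom.refl E) hg).1

lemma Br_single {F G : Set (Finset ℕ)} (hG : DomClosed G) {E : Finset ℕ}
    (hE : E ∈ Br F G) : ∀ x ∈ E, {x} ∈ G := by
  obtain ⟨M', L', h, hM⟩ := hE
  exact h.single hG

/-! ### ranks -/

universe u

/-- rank -/
noncomputable def rk (F : Set (Finset ℕ)) (E : Finset ℕ) : Ordinal.{u} := sInf {ξ | E ∉ D F (ξ + 1)}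

section
variable {F : Set (Finset ℕ)} {α : Ordinal.{u}}

lemma rk_notMem (hα : ∀ E, E ∉ D F (α + 1)) (E : Finset ℕ) : E ∉ D F (rk.{u} F E + 1) :=
  csInf_mem (s := {ξ : Ordinal.{u} | E ∉ D F (ξ + 1)}) ⟨α, hα E⟩

lemma le_rk (hα : ∀ E, E ∉ D F (α + 1)) {E : Finset ℕ} {ξ : Ordinal.{u}} (h : E ∈ D F ξ) :
    ξ ≤ rk F E := by
  by_contra hlt
  exact rk_notMem hα E (D_anti (Order.succ_le_of_lt (not_le.1 hlt)) h)

lemma rk_mem {E : Finset ℕ} (hE : E ∈ F) : E ∈ D F (rk F E) := by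
  rw [mem_D]
  refine ⟨hE, fun η hη => ?_⟩
  have h := notMem_of_lt_csInf' hη
  simp only [Set.mem_ofPred_eq, not_not] at h
  exact (mem_D.1 h).2 η (Order.lt_succ η)

lemma rk_lt (hF : DomClosed F) (hα : ∀ E, E ∉ D F (α + 1)) {E : Finset ℕ} {m : ℕ} (hm : Abv E m)
    (h : insert m E ∈ F) : rk.{u} F (insert m E) < rk.{u} F E := by
  have h1 : E ∈ D F (rk.{u} F (insert m E) + 1) := by
    rw [D_succ hF]
    exact ⟨m, hm, rk_mem h⟩
  exact Order.succ_le_iff.1 (le_rk hα h1)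

lemma rk_empty (hα : ∀ E, E ∉ D F (α + 1)) : rk F ∅ ≤ α := 
  csInf_le' (hα ∅)

end

section
variable {F G : Set (Finset ℕ)} {α β : Ordinal.{u}}

/-- the bound for the rank of a set with greedy decomposition data `M, L` -/
noncomputable def bnd (β : Ordinal) (F G : Set (Finset ℕ)) (M L : Finset ℕ) : Ordinal :=
  β * rk F M + if L = ∅ then 0 else rk G L

lemma bnd_step (hF : DomClosed F) (hG : DomClosed G)
    (hα : ∀ E, E ∉ D F (α + 1)) (hβ : ∀ E, E ∉ D G (β + 1))
    {E M L : Finset ℕ} {m : ℕ} (hm : Abv E m) (hg : Greedy G E M L) (hE : insert m E ∈ Br F G) :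
    ∃ M' L', Greedy G (insert m E) M' L' ∧ bnd β F G M' L' < bnd β F G M L := by
  by_cases hc : L.Nonempty ∧ insert m L ∈ G
  · refine ⟨_, _, .ext hg hm hc.1 hc.2, ?_⟩
    unfold bnd
    rw [if_neg (Finset.insert_ne_empty _ _), if_neg hc.1.ne_empty]
    gcongr
    exact rk_lt hG hβ (hm.mono hg.sub.2) hc.2
  · have hg' : Greedy G (insert m E) (insert m M) {m} := .new hg hm (fun h1 h2 => hc ⟨h1, h2⟩)
    refine ⟨_, _, hg', ?_⟩
    have hM := Br_greedy hF hG hE hg'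
    have h1 : rk F (insert m M) < rk F M := rk_lt hF hα (hm.mono hg.sub.1) hM
    have hmG : {m} ∈ G := Br_single hG hE m (by simp)
    have h2 : rk G {m} < β := by
      have : rk G (insert m ∅) < rk G ∅ := rk_lt hG hβ (by simp [Abv]) (by simpa using hmG)
      exact lt_of_lt_of_le (by simpa using this) (rk_empty hβ)
    unfold bnd
    rw [if_neg (Finset.singleton_ne_empty _)]
    calc β * rk F (insert m M) + rk G {m} < β * rk F (insert m M) + β := by gcongr
      _ = β * (rk F (insert m M) + 1) := by rw [mul_add, mul_one]
      _ ≤ β * rk F M := by gcongr; exact Order.succ_le_of_lt h1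
      _ ≤ _ := le_self_add

lemma Br_noBranch (hF : DomClosed F) (hG : DomClosed G)
    (hα : ∀ E, E ∉ D F (α + 1)) (hβ : ∀ E, E ∉ D G (β + 1)) : NoBranch (Br F G) := by
  intro A hA
  by_contra hcon
  push Not at hcon
  have key : ∀ o : Ordinal, ∀ E M L : Finset ℕ, (E : Set ℕ) ⊆ A → Greedy G E M L →
      bnd β F G M L = o → False := by
    intro o
    induction o using WellFoundedLT.induction with
    | ind o ih =>
      intro E M L hE hg ho
      obtain ⟨N, hN⟩ := exists_Abv E
      obtain ⟨m, hmA, hm⟩ := hA.exists_gt N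
      have hE' : ((insert m E : Finset ℕ) : Set ℕ) ⊆ A := by
        rw [Finset.coe_insert]
        exact Set.insert_subset hmA hE
      obtain ⟨M', L', hg', hlt⟩ := bnd_step hF hG hα hβ (hN m hm.le) hg (hcon _ hE')
      exact ih _ (ho ▸ hlt) _ _ _ hE' hg' rfl
  exact key _ ∅ ∅ ∅ (by simp) .nil rfl

lemma Br_upper (hF : DomClosed F) (hG : DomClosed G)
    (hα : ∀ E, E ∉ D F (α + 1)) (hβ : ∀ E, E ∉ D G (β + 1)) (ξ : Ordinal) :
    ∀ E M L : Finset ℕ, E ∈ D (Br F G) ξ → Greedy G E M L → ξ ≤ bnd β F G M L := by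
  induction ξ using WellFoundedLT.induction with
  | ind ξ ih =>
    intro E M L hE hg
    refine le_of_forall_lt fun η hη => ?_
    obtain ⟨m, hm, hi⟩ := (mem_D.1 hE).2 η hη
    obtain ⟨M', L', hg', hlt⟩ := bnd_step hF hG hα hβ hm hg (D_sub hi)
    exact lt_of_le_of_lt (ih η hη _ _ _ hi hg') hlt

lemma Br_lower (hF : DomClosed F) (hG : DomClosed G) (hβ : ∅ ∈ D G β) (ζ : Ordinal) :
    ∀ (γ : Ordinal) (E M L : Finset ℕ), Dec G E M L → M ∈ D F ζ → L ∈ D G γ →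
      (L.Nonempty ∨ γ = 0) → E ∈ D (Br F G) (β * ζ + γ) := by
  induction ζ using WellFoundedLT.induction with
  | ind ζ ihζ =>
    intro γ
    induction γ using WellFoundedLT.induction with
    | ind γ ihγ =>
      intro E M L h hM hL hne
      rw [mem_D]
      refine ⟨⟨M, L, h, D_sub hM⟩, fun ε hε => ?_⟩
      obtain ⟨N, hN⟩ := exists_Abv E
      rcases lt_or_ge ε (β * ζ) with hlt | hge
      · have hβ0 : β ≠ 0 := by
          rintro rfl
          simp at hlt
        have h1 : ε / β < ζ := (Ordinal.lt_mul_iff_div_lt hβ0).1 hlt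
        have h2 : ε % β < β := Ordinal.mod_lt _ hβ0
        obtain ⟨N1, hN1⟩ := D_large hF hM h1
        obtain ⟨N2, hN2⟩ := D_large hG hβ h2
        have a0 := hN (max N (max N1 N2)) (by simp)
        have a1 := hN1 (max N (max N1 N2)) (by simp)
        have a2 := hN2 (max N (max N1 N2)) (by simp)
        generalize max N (max N1 N2) = m at a0 a1 a2
        refine ⟨m, a0, ?_⟩
        have a3 : {m} ∈ D G (ε % β) := by simpa using a2.2
        have := ihζ _ h1 (ε % β) _ _ _ (Dec.new h a0 (D_sub a3)) a1.2 a3 (by simp)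
        rwa [Ordinal.div_add_mod] at this
      · obtain ⟨δ, rfl⟩ := exists_add_of_le hge
        have hδ : δ < γ := lt_of_add_lt_add_left hε
        have hLne : L.Nonempty := by
          rcases hne with h | h
          · exact h
          · rw [h] at hδ
            exact absurd hδ not_lt_bot
        obtain ⟨N1, hN1⟩ := D_large hG hL hδ
        have a0 := hN (max N N1) (by simp)
        have a1 := hN1 (max N N1) (by simp)
        generalize max N N1 = m at a0 a1
        exact ⟨m, a0, ihγ δ hδ _ _ _ (.ext h a0 hLne (D_sub a1.2)) hM a1.2 (by simp)⟩

lemma Br_CB (hF : DomClosed F) (hG : DomClosed G)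
    (hα : ∅ ∈ D F α ∧ ∀ E, E ∉ D F (α + 1)) (hβ : ∅ ∈ D G β ∧ ∀ E, E ∉ D G (β + 1)) :
    ∅ ∈ D (Br F G) (β * α) ∧ ∀ E, E ∉ D (Br F G) (β * α + 1) := by
  constructor
  · have := Br_lower hF hG hβ.1 α 0 ∅ ∅ ∅ .nil hα.1 (D_anti (zero_le) hβ.1) (.inr rfl)
    simpa using this
  · intro E hE
    have h0 := D_domClosed (Br_domClosed hF hG) _ _ hE _ (Dom.empty E)
    have h1 := Br_upper hF hG hα.2 hβ.2 _ _ _ _ h0 .nil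
    unfold bnd at h1
    rw [if_pos rfl, add_zero] at h1
    have h2 : β * rk F ∅ ≤ β * α := by gcongr; exact rk_empty hα.2
    exact absurd (h1.trans h2) (not_le.2 (Order.lt_succ _))

end

/-! ### the bracket family is `Br` -/

lemma min_eq {P : Finset ℕ} (h : P.Nonempty) : P.min' h = sInf (P : Set ℕ) :=
  (h.csInf_eq_min').symm

lemma sInf_insert_max {P : Finset ℕ} (h : P.Nonempty) {m : ℕ} (hm : Abv P m) :
    sInf ((insert m P : Finset ℕ) : Set ℕ) = sInf (P : Set ℕ) := by
  rw [← min_eq h, ← min_eq (Finset.insert_nonempty _ _)]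
  apply le_antisymm
  · exact Finset.min'_le _ _ (Finset.mem_insert_of_mem (Finset.min'_mem _ _))
  · apply Finset.le_min'
    intro y hy
    rcases Finset.mem_insert.1 hy with rfl | hy
    · exact (hm _ (Finset.min'_mem _ h)).le
    · exact Finset.min'_le _ _ hy

lemma Dec.append {G : Set (Finset ℕ)} (hG : DomClosed G) {E M L : Finset ℕ} (h : Dec G E M L)
    (P : Finset ℕ) : P.Nonempty → P ∈ G → FinsetLT E P →
      Dec G (E ∪ P) (insert (sInf (P : Set ℕ)) M) P := by
  induction P using Finset.induction_on_max with
  | empty => intro h; simp at h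
  | insert a P ha ih =>
    intro _ hPG hlt
    have haE : Abv E a := fun x hx => hlt x hx a (by simp)
    by_cases hP : P.Nonempty
    · have h1 := ih hP (hG _ hPG _ (Dom.of_subset (Finset.subset_insert _ _)))
        (fun x hx b hb => hlt x hx b (Finset.mem_insert_of_mem hb))
      have h2 := Dec.ext (m := a) h1 (by
        intro x hx
        rcases Finset.mem_union.1 hx with hx | hx
        · exact haE x hx
        · exact ha x hx) hP hPG
      rw [Finset.union_insert]
      have h3 : sInf ((insert a P : Finset ℕ) : Set ℕ) = sInf (P : Set ℕ) := sInf_insert_max hP ha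
      rw [h3]
      exact h2
    · rw [Finset.not_nonempty_iff_eq_empty] at hP
      subst hP
      simp only [insert_empty_eq] at *
      have := Dec.new h haE hPG
      rw [Finset.union_comm]
      simpa using this

lemma Dec_of_fin {G : Set (Finset ℕ)} (hG : DomClosed G) (n : ℕ) :
    ∀ (Es : Fin n → Finset ℕ), (∀ i, (Es i).Nonempty) → (∀ i, Es i ∈ G) →
      (∀ i j : Fin n, i < j → FinsetLT (Es i) (Es j)) →
      ∃ L, Dec G (Finset.univ.biUnion Es)
        (Finset.univ.image fun i => sInf ((Es i : Finset ℕ) : Set ℕ)) L := by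
  induction n with
  | zero =>
    intro Es _ _ _
    exact ⟨∅, by simpa using Dec.nil⟩
  | succ n ih =>
    intro Es hne hEG hlt
    obtain ⟨L, hL⟩ := ih (fun i => Es i.castSucc) (fun i => hne _) (fun i => hEG _)
      (fun i j hij => hlt _ _ (by simpa using hij))
    have := hL.append hG (Es (Fin.last n)) (hne _) (hEG _) (by
      intro x hx y hy
      simp only [Finset.mem_biUnion, Finset.mem_univ, true_and] at hx
      obtain ⟨i, hi⟩ := hx
      exact hlt _ _ (Fin.castSucc_lt_last i) x hi y hy)
    refine ⟨Es (Fin.last n), ?_⟩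
    convert this using 1
    · ext x
      simp only [Finset.mem_biUnion, Finset.mem_univ, true_and, Finset.mem_union]
      rw [Fin.exists_fin_succ']
    · ext x
      simp only [Finset.mem_image, Finset.mem_univ, true_and, Finset.mem_insert]
      rw [Fin.exists_fin_succ', or_comm]
      tauto

lemma fin_of_Dec {G : Set (Finset ℕ)} {E M L : Finset ℕ} (h : Dec G E M L) :
    (E = ∅ ∧ M = ∅ ∧ L = ∅) ∨ ∃ (n : ℕ) (Es : Fin (n + 1) → Finset ℕ), (∀ i, (Es i).Nonempty) ∧
      (∀ i, Es i ∈ G) ∧ (∀ i j, i < j → FinsetLT (Es i) (Es j)) ∧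
      (∀ x, x ∈ M ↔ ∃ i, sInf ((Es i : Finset ℕ) : Set ℕ) = x) ∧
      (∀ x, x ∈ E ↔ ∃ i, x ∈ Es i) ∧ Es (Fin.last n) = L := by
  induction h with
  | nil => exact .inl ⟨rfl, rfl, rfl⟩
  | @ext E M L m h hm hL hLG ih =>
    right
    rcases ih with ⟨_, _, rfl⟩ | ⟨n, Es, h1, h2, h3, h4, h5, rfl⟩
    · simp at hL
    refine ⟨n, Fin.snoc (α := fun _ => Finset ℕ) (fun i : Fin n => Es i.castSucc)
      (insert m (Es (Fin.last n))), ?_, ?_, ?_, ?_, ?_, ?_⟩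
    · intro i
      induction i using Fin.lastCases with
      | last => simp
      | cast i => simpa using h1 _
    · intro i
      induction i using Fin.lastCases with
      | last => simpa using hLG
      | cast i => simpa using h2 _
    · intro i j hij
      induction i using Fin.lastCases with
      | last => exact absurd hij (not_lt.2 (Fin.le_last _))
      | cast i =>
        induction j using Fin.lastCases with
        | cast j => simpa using h3 _ _ hij
        | last =>
          simp only [Fin.snoc_castSucc, Fin.snoc_last]
          intro x hx y hy
          rcases Finset.mem_insert.1 hy with rfl | hy
          · exact hm x ((h5 x).2 ⟨_, hx⟩)
          · exact h3 _ _ hij x hx y hy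
    · intro x
      rw [h4, Fin.exists_fin_succ', Fin.exists_fin_succ']
      simp only [Fin.snoc_castSucc, Fin.snoc_last]
      rw [sInf_insert_max (h1 _) (hm.mono fun x hx => (h5 x).2 ⟨_, hx⟩)]
    · intro x
      rw [Finset.mem_insert, h5, Fin.exists_fin_succ', Fin.exists_fin_succ']
      simp only [Fin.snoc_castSucc, Fin.snoc_last, Finset.mem_insert]
      tauto
    · simp
  | @new E M L m h hm hLG ih =>
    right
    rcases ih with ⟨rfl, rfl, rfl⟩ | ⟨n, Es, h1, h2, h3, h4, h5, rfl⟩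
    · refine ⟨0, fun _ => {m}, by simp, fun _ => hLG, ?_, ?_, by simp, rfl⟩
      · intro i j hij
        omega
      · intro x
        simp [eq_comm]
    refine ⟨n + 1, Fin.snoc (α := fun _ => Finset ℕ) Es {m}, ?_, ?_, ?_, ?_, ?_, ?_⟩
    · intro i
      induction i using Fin.lastCases with
      | last => simp
      | cast i => simpa using h1 _
    · intro i
      induction i using Fin.lastCases with
      | last => simpa using hLG
      | cast i => simpa using h2 _
    · intro i j hij
      induction i using Fin.lastCases with
      | last => exact absurd hij (not_lt.2 (Fin.le_last _))
      | cast i =>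
        induction j using Fin.lastCases with
        | cast j => simpa using h3 _ _ (by simpa using hij)
        | last =>
          simp only [Fin.snoc_castSucc, Fin.snoc_last]
          intro x hx y hy
          rw [Finset.mem_singleton] at hy
          rw [hy]
          exact hm x ((h5 x).2 ⟨_, hx⟩)
    · intro x
      rw [Fin.exists_fin_succ', Finset.mem_insert, h4]
      simp only [Fin.snoc_castSucc, Fin.snoc_last]
      simp only [Finset.coe_singleton, csInf_singleton]
      rw [or_comm, eq_comm (a := m)]
    · intro x
      rw [Fin.exists_fin_succ', Finset.mem_insert, h5]
      simp only [Fin.snoc_castSucc, Fin.snoc_last, Finset.mem_singleton]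
      tauto
    · simp

lemma bracketFam_eq {F G : Set (Finset ℕ)} (hG : DomClosed G) (h0 : ∅ ∈ F) :
    bracketFam F G = Br F G := by
  ext E
  constructor
  · rintro (h | ⟨n, hn, Es, hne, h1, h2, h3, rfl⟩)
    · rw [Set.mem_singleton_iff] at h
      subst h
      exact ⟨∅, ∅, .nil, h0⟩
    · obtain ⟨L, hL⟩ := Dec_of_fin hG n Es hne h1 h2
      refine ⟨_, L, hL, ?_⟩
      simpa only [min_eq] using h3
  · rintro ⟨M, L, h, hM⟩
    rcases fin_of_Dec h with ⟨rfl, _, _⟩ | ⟨n, Es, h1, h2, h3, h4, h5, _⟩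
    · exact .inl rfl
    · refine .inr ⟨n + 1, Nat.succ_pos _, Es, h1, h2, h3, ?_, ?_⟩
      · simp only [min_eq]
        convert hM using 1
        ext x
        rw [h4]
        simp
      · ext x
        rw [h5]
        simp

end BF

/-- If `F`, `G` are regular with Cantor–Bendixson indices `α+1` and `β+1`, then `F[G]`
is regular with Cantor–Bendixson index `β·α + 1`. -/
theorem bracketFam_regular_CB {F G : Set (Finset ℕ)}
    (hF : RegularFam F) (hG : RegularFam G) (α β : Ordinal)
    (hα : CBfam F = α + 1) (hβ : CBfam G = β + 1) :
    RegularFam (bracketFam F G) ∧ CBfam (bracketFam F G) = β * α + 1 := by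
  have hFd : BF.DomClosed F := BF.domClosed_iff.2 ⟨hF.1, hF.2.1⟩
  have hGd : BF.DomClosed G := BF.domClosed_iff.2 ⟨hG.1, hG.2.1⟩
  have hFN := (BF.isCompact_iff hF.1).1 hF.2.2
  have hGN := (BF.isCompact_iff hG.1).1 hG.2.2
  have hα' := (BF.CBfam_iff hFd hFN α).1 hα
  have hβ' := (BF.CBfam_iff hGd hGN β).1 hβ
  rw [BF.bracketFam_eq hGd (BF.D_sub hα'.1)]
  have hd := BF.Br_domClosed hFd hGd
  have hN := BF.Br_noBranch hFd hGd hα'.2 hβ'.2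
  have hHS := BF.domClosed_iff.1 hd
  exact ⟨⟨hHS.1, hHS.2, (BF.isCompact_iff hHS.1).2 hN⟩,
    (BF.CBfam_iff hd hN _).2 (BF.Br_CB hFd hGd hα' hβ')⟩
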